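/- Let p be a prime and let G be a torsion-free abelian group. Consider the natural homomorphism Φ^p from G to the double dual Hom(Hom(G, ℤ_p), ℤ_p), sending g to the evaluation map ĝ : f ↦ f(g). Then: (1) for every g ∈ G, d_p(g, 0) = max{‖f(g)‖ : f ∈ Hom(G, ℤ_p)}, i.e., ‖f(g)‖ ≤ d_p(g, 0) for every p-adic functional f and this bound is attained; in particular Φ^p is a pseudo-isometry from (G, d_p) onto its image; and (2) the image {ĝ : g ∈ G} is dense in Hom(Hom(G, ℤ_p), ℤ_p) with respect to the relative topology (the topology of pointwise convergence inherited from the product space ℤ_p^{Hom(G, ℤ_p)}). -/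

import Mathlib

/-- `g` is divisible by `p ^ k` in `G`. -/
def pDvd (p : ℕ) {G : Type*} [AddCommGroup G] (k : ℕ) (g : G) : Prop :=
  ∃ x : G, p ^ k • x = g

/-- The `p`-adic pseudometric on a torsion-free abelian group. -/
noncomputable def pdist (p : ℕ) {G : Type*} [AddCommGroup G] (g h : G) : ℝ :=
  sInf {r : ℝ | ∃ k : ℕ, pDvd p k (g - h) ∧ r = (p : ℝ) ^ (-(k : ℤ))}

/-!
Since `ℚ ⧸ ℤ` is injective, a subgroup `S` of `A` containing `n • A` is an intersection of kernels
of homomorphisms `A →+ ZMod n`. This is used twice.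

* If `g ∉ p ^ k • G` and `G` has no `p`-torsion, then `p ^ j • g ∉ p ^ (j + k) • G`, so it is
  detected by some `G →+ ZMod (p ^ (j + k))`. Lifting values to `ℤ_[p]` gives maps that are additive
  modulo `p ^ (j + k)` and do not send `g` into `p ^ k ℤ_[p]`; by compactness of `G → ℤ_[p]` there
  is a genuine functional with this property, hence one attaining the distance.
* If `(Φ f₁, …, Φ fₙ)` modulo `p ^ k` is not in the image of `G`, then some combination `∑ mᵢ fᵢ` is
  divisible by `p ^ k` at every point of `G` although `∑ mᵢ Φ fᵢ` is not. The former says that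
  `∑ mᵢ fᵢ` is `p ^ k` times a functional, which contradicts the additivity of `Φ`.
-/

section ZModDuality

lemma mem_zmultiples_div_of_nsmul_eq_zero {𝕜 : Type*} [Field 𝕜] [LinearOrder 𝕜]
    [IsStrictOrderedRing 𝕜] {r : 𝕜} [Fact (0 < r)] {n : ℕ} [NeZero n] {u : AddCircle r}
    (hu : n • u = 0) :
    u ∈ AddSubgroup.zmultiples ((r / n : 𝕜) : AddCircle r) := by
  obtain ⟨m, -, rfl⟩ := (AddCircle.nsmul_eq_zero_iff (NeZero.pos n)).1 hu
  refine ⟨m, ?_⟩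
  simp only [natCast_zsmul, ← AddCircle.coe_nsmul, nsmul_eq_mul]
  congr 1
  ring

lemma exists_addMonoidHom_zmod_le_ker_and_ne_zero {n : ℕ} [NeZero n] {A : Type*} [AddCommGroup A]
    {S : AddSubgroup A} (hS : ∀ a, n • a ∈ S) {v : A} (hv : v ∉ S) :
    ∃ φ : A →+ ZMod n, S ≤ φ.ker ∧ φ v ≠ 0 := by
  obtain ⟨c, hc⟩ := CharacterModule.exists_character_apply_ne_zero_of_ne_zero
    (mt (QuotientAddGroup.eq_zero_iff v).1 hv)
  let u : AddCircle (1 : ℚ) := ((1 / n : ℚ) : AddCircle (1 : ℚ))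
  have hcu (x : A ⧸ S) : c x ∈ AddSubgroup.zmultiples u := by
    obtain ⟨a, rfl⟩ := QuotientAddGroup.mk_surjective x
    apply mem_zmultiples_div_of_nsmul_eq_zero
    rw [← map_nsmul, ← QuotientAddGroup.mk_nsmul, (QuotientAddGroup.eq_zero_iff _).2 (hS a),
      map_zero]
  let u' : AddSubgroup.zmultiples u := ⟨u, AddSubgroup.mem_zmultiples u⟩
  have hgen (x : AddSubgroup.zmultiples u) : x ∈ AddSubgroup.zmultiples u' := by
    obtain ⟨_, m, rfl⟩ := x
    exact ⟨m, rfl⟩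
  have hcard : Nat.card (AddSubgroup.zmultiples u) = n := by
    rw [Nat.card_zmultiples, AddCircle.addOrderOf_period_div (NeZero.pos n)]
  let e : AddSubgroup.zmultiples u ≃+ ZMod n := (zmodAddEquivOfGenerator hgen hcard).symm
  let φ : A ⧸ S →+ ZMod n := e.toAddMonoidHom.comp (AddMonoidHom.codRestrict c _ hcu)
  refine ⟨φ.comp (QuotientAddGroup.mk' S), fun s hs => ?_, fun h => hc ?_⟩
  · rw [AddMonoidHom.mem_ker, AddMonoidHom.comp_apply, QuotientAddGroup.mk'_apply,
      (QuotientAddGroup.eq_zero_iff s).2 hs, map_zero]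
  · exact congrArg Subtype.val ((map_eq_zero_iff e e.injective).1 h)

lemma exists_zmod_dotProduct_eq_zero_and_ne_zero {n : ℕ} [NeZero n] {ι : Type*} [Fintype ι]
    {S : AddSubgroup (ι → ZMod n)} {v : ι → ZMod n} (hv : v ∉ S) :
    ∃ m : ι → ZMod n, (∀ s ∈ S, s ⬝ᵥ m = 0) ∧ v ⬝ᵥ m ≠ 0 := by
  classical
  obtain ⟨φ, hφS, hφv⟩ := exists_addMonoidHom_zmod_le_ker_and_ne_zero (n := n) (fun a => by
    rw [← Nat.cast_smul_eq_nsmul (ZMod n), ZMod.natCast_self, zero_smul]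
    exact S.zero_mem) hv
  have hφ (x : ι → ZMod n) : φ x = x ⬝ᵥ fun i => φ fun j => if i = j then 1 else 0 :=
    LinearMap.pi_apply_eq_sum_univ (φ.toZModLinearMap n) x
  exact ⟨_, fun s hs => hφ s ▸ hφS hs, hφ v ▸ hφv⟩

end ZModDuality

section PadicInt

open scoped Topology

variable {p : ℕ} [Fact p.Prime]

lemma norm_le_zpow_neg_iff_pow_dvd {z : ℤ_[p]} {k : ℕ} :
    ‖z‖ ≤ (p : ℝ) ^ (-(k : ℤ)) ↔ (p : ℤ_[p]) ^ k ∣ z := by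
  rw [PadicInt.norm_le_pow_iff_mem_span_pow, Ideal.mem_span_singleton]

lemma toZModPow_eq_zero_iff_pow_dvd {z : ℤ_[p]} {k : ℕ} :
    PadicInt.toZModPow k z = 0 ↔ (p : ℤ_[p]) ^ k ∣ z := by
  rw [← RingHom.mem_ker, PadicInt.ker_toZModPow, Ideal.mem_span_singleton]

lemma isClopen_setOf_pow_dvd (k : ℕ) : IsClopen {z : ℤ_[p] | (p : ℤ_[p]) ^ k ∣ z} := by
  constructor
  · simp only [← norm_le_zpow_neg_iff_pow_dvd]
    exact isClosed_le continuous_norm continuous_const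
  · simp only [← norm_le_zpow_neg_iff_pow_dvd, PadicInt.norm_le_pow_iff_norm_lt_pow_add_one]
    exact isOpen_lt continuous_norm continuous_const

lemma zpow_neg_le_norm_of_not_pow_succ_dvd {z : ℤ_[p]} {k : ℕ}
    (hz : ¬ (p : ℤ_[p]) ^ (k + 1) ∣ z) : (p : ℝ) ^ (-(k : ℤ)) ≤ ‖z‖ := by
  rw [← norm_le_zpow_neg_iff_pow_dvd, PadicInt.norm_le_pow_iff_norm_lt_pow_add_one, not_lt] at hz
  simpa using hz

lemma hasBasis_nhds_pow_dvd_sub (z : ℤ_[p]) :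
    (𝓝 z).HasBasis (fun _ : ℕ => True) fun k => {w | (p : ℤ_[p]) ^ k ∣ w - z} := by
  have hp : (1 : ℝ) < p := mod_cast (Fact.out : p.Prime).one_lt
  have hball := Metric.nhds_basis_closedBall_pow (x := z) (inv_pos.2 (zero_lt_one.trans hp))
    (inv_lt_one_of_one_lt₀ hp)
  simpa only [← norm_le_zpow_neg_iff_pow_dvd, ← dist_eq_norm, zpow_neg, zpow_natCast, inv_pow,
    Metric.closedBall] using hball

lemma mem_closure_of_forall_pow_dvd_sub {α : Type*} {S : Set (α → ℤ_[p])} {ψ : α → ℤ_[p]}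
    (h : ∀ I : Set α, I.Finite → ∀ k : ℕ, ∃ s ∈ S, ∀ i ∈ I, (p : ℤ_[p]) ^ k ∣ s i - ψ i) :
    ψ ∈ closure S := by
  rw [mem_closure_iff_nhds]
  intro t ht
  rw [nhds_pi, Filter.mem_pi] at ht
  obtain ⟨I, hI, u, hu, hut⟩ := ht
  choose k hk using fun i => (hasBasis_nhds_pow_dvd_sub (ψ i)).mem_iff.1 (hu i)
  obtain ⟨K, hK⟩ := (hI.image k).bddAbove
  obtain ⟨s, hsS, hs⟩ := h I hI K
  exact ⟨s, hut fun i hi => (hk i).2 <|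
    (pow_dvd_pow _ (hK (Set.mem_image_of_mem k hi))).trans (hs i hi), hsS⟩

end PadicInt

section Functionals

lemma exists_nsmul_eq_of_forall_natCast_dvd {G R : Type*} [AddGroup G] [Ring R] {n : ℕ}
    (hn : IsLeftRegular (n : R)) {f : G →+ R} (hf : ∀ g, (n : R) ∣ f g) :
    ∃ f' : G →+ R, n • f' = f := by
  choose q hq using hf
  refine ⟨AddMonoidHom.mk' q fun a b => hn ?_, ?_⟩
  · simp only [mul_add, ← hq, map_add]
  · ext g
    simp [hq g]

variable {p : ℕ} [Fact p.Prime]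

lemma exists_addMonoidHom_mem_of_forall_exists_pow_dvd {G : Type*} [AddGroup G]
    {C : Set (G → ℤ_[p])} (hC : IsClosed C)
    (h : ∀ n : ℕ, ∃ f ∈ C, ∀ a b, (p : ℤ_[p]) ^ n ∣ f (a + b) - (f a + f b)) :
    ∃ f : G →+ ℤ_[p], ⇑f ∈ C := by
  let K (n : ℕ) : Set (G → ℤ_[p]) :=
    C ∩ ⋂ (a : G) (b : G), {f | (p : ℤ_[p]) ^ n ∣ f (a + b) - (f a + f b)}
  have hK (n : ℕ) : IsClosed (K n) := hC.inter <| isClosed_iInter fun a => isClosed_iInter fun b =>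
    (isClopen_setOf_pow_dvd n).isClosed.preimage (by fun_prop)
  obtain ⟨f, hf⟩ : (⋂ n, K n).Nonempty := by
    refine IsCompact.nonempty_iInter_of_sequence_nonempty_isCompact_isClosed K
      (fun n => ?_) (fun n => ?_) (hK 0).isCompact hK
    · exact Set.inter_subset_inter_right C <| Set.iInter₂_mono fun a b f hf =>
        (pow_dvd_pow _ n.le_succ).trans hf
    · obtain ⟨f, hfC, hf⟩ := h n
      exact ⟨f, hfC, Set.mem_iInter₂.2 hf⟩
  rw [Set.mem_iInter] at hf
  refine ⟨AddMonoidHom.mk' f fun a b => ?_, (hf 0).1⟩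
  refine PadicInt.ext_of_toZModPow.1 fun n => ?_
  rw [← sub_eq_zero, ← map_sub, toZModPow_eq_zero_iff_pow_dvd]
  exact Set.mem_iInter₂.1 (hf n).2 a b

variable {G : Type*} [AddCommGroup G]

lemma exists_addMonoidHom_not_pow_dvd (hG : IsSMulRegular G p) {k : ℕ} {g : G}
    (hg : ¬ pDvd p k g) : ∃ f : G →+ ℤ_[p], ¬ (p : ℤ_[p]) ^ k ∣ f g := by
  have hC : IsClosed {f : G → ℤ_[p] | ¬ (p : ℤ_[p]) ^ k ∣ f g} :=
    (isClopen_setOf_pow_dvd k).compl.isClosed.preimage (f := fun f : G → ℤ_[p] => f g) (by fun_prop)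
  refine exists_addMonoidHom_mem_of_forall_exists_pow_dvd hC fun j => ?_
  have hgj : p ^ j • g ∉ (nsmulAddMonoidHom (α := G) (p ^ (j + k))).range := by
    rintro ⟨x, hx⟩
    refine hg ⟨x, hG.pow j ?_⟩
    simpa only [pow_add, mul_smul, nsmulAddMonoidHom_apply] using hx
  obtain ⟨φ, -, hφ⟩ := exists_addMonoidHom_zmod_le_ker_and_ne_zero
    (fun a => AddMonoidHom.mem_range.2 ⟨a, rfl⟩) hgj
  have hlift : Function.Surjective (PadicInt.toZModPow (p := p) (j + k)) :=
    ZMod.ringHom_surjective _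
  choose σ hσ using hlift
  refine ⟨σ ∘ φ, fun hdvd => hφ ?_, fun a b => (pow_dvd_pow _ (j.le_add_right k)).trans ?_⟩
  · rw [map_nsmul, ← hσ (φ g), ← map_nsmul, toZModPow_eq_zero_iff_pow_dvd, nsmul_eq_mul,
      Nat.cast_pow, pow_add]
    exact mul_dvd_mul_left _ hdvd
  · rw [← toZModPow_eq_zero_iff_pow_dvd]
    simp only [Function.comp_apply, map_sub, map_add, hσ, sub_self]

lemma exists_forall_pow_dvd_apply_sub {ι : Type*} [Finite ι] (Φ : (G →+ ℤ_[p]) →+ ℤ_[p])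
    (f : ι → G →+ ℤ_[p]) (k : ℕ) : ∃ g : G, ∀ i, (p : ℤ_[p]) ^ k ∣ f i g - Φ (f i) := by
  cases nonempty_fintype ι
  let π : ℤ_[p] →+* ZMod (p ^ k) := PadicInt.toZModPow k
  let F : G →+ ι → ZMod (p ^ k) := AddMonoidHom.pi fun i => π.toAddMonoidHom.comp (f i)
  suffices hv : (fun i => π (Φ (f i))) ∈ F.range by
    obtain ⟨g, hg⟩ := hv
    refine ⟨g, fun i => toZModPow_eq_zero_iff_pow_dvd.1 ?_⟩
    rw [map_sub, sub_eq_zero]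
    exact congrFun hg i
  by_contra hv
  obtain ⟨m, hmF, hmv⟩ := exists_zmod_dotProduct_eq_zero_and_ne_zero hv
  let f₀ : G →+ ℤ_[p] := ∑ i, (m i).val • f i
  have hf₀ (g : G) : (p : ℤ_[p]) ^ k ∣ f₀ g := by
    rw [← toZModPow_eq_zero_iff_pow_dvd, ← hmF (F g) ⟨g, rfl⟩]
    simp [f₀, F, π, dotProduct, AddMonoidHom.finsetSum_apply, mul_comm]
  have hreg : IsLeftRegular ((p ^ k : ℕ) : ℤ_[p]) :=
    (IsRegular.of_ne_zero (mod_cast pow_ne_zero k (Fact.out : p.Prime).ne_zero)).left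
  obtain ⟨f', hf'⟩ := exists_nsmul_eq_of_forall_natCast_dvd hreg (f := f₀) (mod_cast hf₀)
  have hΦ : (p : ℤ_[p]) ^ k ∣ Φ f₀ := ⟨Φ f', by simp [← hf']⟩
  rw [← toZModPow_eq_zero_iff_pow_dvd] at hΦ
  apply hmv
  rw [← hΦ]
  simp [f₀, π, dotProduct, mul_comm]

lemma coe_mem_closure_setOf_eval (Φ : (G →+ ℤ_[p]) →+ ℤ_[p]) :
    ⇑Φ ∈ closure {ψ : (G →+ ℤ_[p]) → ℤ_[p] | ∃ g : G, ψ = fun f => f g} := by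
  refine mem_closure_of_forall_pow_dvd_sub fun I hI k => ?_
  have := hI.to_subtype
  obtain ⟨g, hg⟩ := exists_forall_pow_dvd_apply_sub Φ ((↑) : I → G →+ ℤ_[p]) k
  exact ⟨fun f => f g, ⟨g, rfl⟩, fun f hf => hg ⟨f, hf⟩⟩

end Functionals

section Pseudometric

variable {p : ℕ} {G : Type*} [AddCommGroup G]

lemma pDvd_zero (g : G) : pDvd p 0 g := ⟨g, by simp⟩

lemma pdist_le_of_pDvd {k : ℕ} {g h : G} (hk : pDvd p k (g - h)) :
    pdist p g h ≤ (p : ℝ) ^ (-(k : ℤ)) := by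
  refine csInf_le ⟨0, ?_⟩ ⟨k, hk, rfl⟩
  rintro _ ⟨j, -, rfl⟩
  positivity

variable [Fact p.Prime]

lemma pDvd.pow_dvd_apply {k : ℕ} {g : G} (hk : pDvd p k g) (f : G →+ ℤ_[p]) :
    (p : ℤ_[p]) ^ k ∣ f g := by
  obtain ⟨x, rfl⟩ := hk
  exact ⟨f x, by simp⟩

lemma norm_sub_le_pdist (f : G →+ ℤ_[p]) (g h : G) : ‖f g - f h‖ ≤ pdist p g h := by
  refine le_csInf ⟨_, 0, pDvd_zero _, rfl⟩ ?_
  rintro _ ⟨k, hk, rfl⟩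
  rw [norm_le_zpow_neg_iff_pow_dvd, ← map_sub]
  exact hk.pow_dvd_apply f

lemma exists_norm_sub_eq_pdist (hG : IsSMulRegular G p) (g h : G) :
    ∃ f : G →+ ℤ_[p], ‖f g - f h‖ = pdist p g h := by
  suffices ∃ f : G →+ ℤ_[p], pdist p g h ≤ ‖f g - f h‖ from
    this.imp fun f hf => (norm_sub_le_pdist f g h).antisymm hf
  by_cases hall : ∀ k, pDvd p k (g - h)
  · refine ⟨0, le_of_forall_pos_lt_add fun ε hε => ?_⟩
    obtain ⟨k, hk⟩ := PadicInt.exists_pow_neg_lt p hε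
    simpa using (pdist_le_of_pDvd (hall k)).trans_lt hk
  · obtain ⟨k, hk, hk'⟩ := Nat.exists_not_and_succ_of_not_zero_of_exists
      (not_not.2 (pDvd_zero (g - h))) (not_forall.1 hall)
    obtain ⟨f, hf⟩ := exists_addMonoidHom_not_pow_dvd hG hk'
    refine ⟨f, (pdist_le_of_pDvd (not_not.1 hk)).trans ?_⟩
    rw [← map_sub]
    exact zpow_neg_le_norm_of_not_pow_succ_dvd hf

end Pseudometric

theorem stmt15_general (p : ℕ) [Fact p.Prime] (G : Type*) [AddCommGroup G]
    (hG : IsSMulRegular G p) :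
    (∀ g : G, (∀ f : G →+ ℤ_[p], ‖f g‖ ≤ pdist p g 0) ∧
      ∃ f : G →+ ℤ_[p], ‖f g‖ = pdist p g 0) ∧
    (∀ Φ : (G →+ ℤ_[p]) →+ ℤ_[p],
      (⇑Φ : (G →+ ℤ_[p]) → ℤ_[p]) ∈
        closure {ψ : (G →+ ℤ_[p]) → ℤ_[p] | ∃ g : G, ψ = fun f => f g}) := by
  refine ⟨fun g => ⟨fun f => ?_, ?_⟩, coe_mem_closure_setOf_eval⟩
  · simpa using norm_sub_le_pdist f g 0
  · simpa using exists_norm_sub_eq_pdist hG g 0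

/-- The natural map `Φ^p : G → Hom(Hom(G, ℤ_p), ℤ_p)` is a pseudo-isometry
(`d_p(g, 0) = max ‖f g‖` over all `p`-adic functionals `f`), and its image is
dense in the double dual with respect to the topology of pointwise convergence
inherited from the product space `ℤ_p^{Hom(G, ℤ_p)}`. -/
theorem stmt15 (p : ℕ) [Fact p.Prime] (G : Type*) [AddCommGroup G]
    [NoZeroSMulDivisors ℤ G] :
    (∀ g : G, (∀ f : G →+ ℤ_[p], ‖f g‖ ≤ pdist p g 0) ∧
      ∃ f : G →+ ℤ_[p], ‖f g‖ = pdist p g 0) ∧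
    (∀ Φ : (G →+ ℤ_[p]) →+ ℤ_[p],
      (⇑Φ : (G →+ ℤ_[p]) → ℤ_[p]) ∈
        closure {ψ : (G →+ ℤ_[p]) → ℤ_[p] | ∃ g : G, ψ = fun f => f g}) := by
  have hG : Function.Injective fun x : G => (p : ℤ) • x :=
    smul_right_injective G (mod_cast (Fact.out : p.Prime).ne_zero)
  exact stmt15_general p G (by simpa only [IsSMulRegular, natCast_zsmul] using hG)
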